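/- Let $k \ge 1$ and let $a, b, c$ be positive integers satisfying $b \ge a + c + k$. Then there exist matrices $A$ of size $b \times a$ and $B$ of size $c \times b$ whose entries are linear forms in $K[x_0,\dots,x_k]$ such that $B A = 0$, $A$ has rank $a$ at every point of $\mathbb{P}^k$, and $B$ has rank $c$ at every point of $\mathbb{P}^k$ (i.e., there exists a linear monad $0 \to \mathcal{O}_{\mathbb{P}^k}(-1)^{\oplus a} \to \mathcal{O}_{\mathbb{P}^k}^{\oplus b} \to \mathcal{O}_{\mathbb{P}^k}(1)^{\oplus c} \to 0$). -/

import Mathlib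

/-!
By transposition we may assume `a ≤ c`. To a point `x` of `ℙᵏ` attach the polynomial
`z = x₀ + x₁ X + ⋯ + x_k Xᵏ`. The product `z(X) z(-X)` is even. Choose `e ∈ {0, 1}` with `b + e` odd
and put `M = Xᵇ - Xᵉ` and `Q = b + e - 2`. On polynomials of degree less than `c`, the transpose of
`B` is `w ↦ z(-X) w(X²) mod M`, with values in `K[X] / M ≅ Kᵇ`; on polynomials of degree less than
`a`, the map `A` sends `u` to the functional "coefficient of `X ^ Q` in `z(X) u(X²) r(X)`" of the
remainder `r`.

* `B A = 0`: reduction modulo `M` does not affect the coefficient of `X ^ Q` because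
  `b ≥ a + c + k`, and `z(X) z(-X) u(X²) w(X²)` is even while `Q` is odd.
* `Bᵀ` is injective: if `z(-X) w(X²) = M q` then `z q M` is even. The exponents of `M` have
  opposite parities and `deg (z q) < b - e`, so `z q = 0`.
* `A` is injective: `z(X) u(X²)` has degree at most `Q`, so the functional sees all its
  coefficients.
-/

open Polynomial Matrix

section EvenPolynomials

variable {R : Type*} [CommRing R]

theorem exists_eq_expand_two_add_X_mul_expand_two (f : R[X]) :
    ∃ p q : R[X], f = expand R 2 p + X * expand R 2 q := by
  refine ⟨contract 2 f, contract 2 f.divX, ?_⟩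
  ext n
  rcases n with _ | n
  · simp [coeff_expand, coeff_contract]
  · rw [coeff_add, coeff_X_mul, coeff_expand two_pos, coeff_expand two_pos,
      coeff_contract two_ne_zero, coeff_contract two_ne_zero, coeff_divX]
    rcases Nat.even_or_odd n with hn | hn
    · rw [if_neg (by grind), if_pos hn.two_dvd, Nat.div_mul_cancel hn.two_dvd, zero_add]
    · have hdvd : 2 ∣ n + 1 := by grind
      rw [if_pos hdvd, if_neg (by grind), Nat.div_mul_cancel hdvd, add_zero]

theorem expand_two_comp_neg_X (p : R[X]) : (expand R 2 p).comp (-X) = expand R 2 p := by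
  simp only [expand_eq_comp_X_pow, comp_assoc, pow_comp, X_comp, neg_sq]

theorem mul_comp_neg_X_mem_range_expand_two (f : R[X]) :
    f * f.comp (-X) ∈ (expand R 2).range := by
  obtain ⟨p, q, rfl⟩ := exists_eq_expand_two_add_X_mul_expand_two f
  refine ⟨p ^ 2 - X * q ^ 2, ?_⟩
  simp only [AlgHom.toRingHom_eq_coe, RingHom.coe_coe, add_comp, mul_comp, X_comp,
    expand_two_comp_neg_X, map_sub, map_mul, map_pow, expand_X]
  ring

theorem coeff_eq_zero_of_mem_range_expand_two {f : R[X]} (hf : f ∈ (expand R 2).range) {n : ℕ}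
    (hn : Odd n) : f.coeff n = 0 := by
  obtain ⟨p, rfl⟩ := hf
  exact (coeff_expand two_pos p n).trans (if_neg hn.not_two_dvd_nat)

end EvenPolynomials

section Binomial

variable {R : Type*} [Ring R] {b e : ℕ}

theorem monic_X_pow_sub_X_pow (he : e < b) : (X ^ b - X ^ e : R[X]).Monic :=
  monic_X_pow_sub <| (degree_X_pow_le e).trans_lt <| mod_cast he

theorem degree_X_pow_sub_X_pow [Nontrivial R] (he : e < b) :
    (X ^ b - X ^ e : R[X]).degree = b :=
  (degree_sub_eq_left_of_degree_lt (by simpa using he)).trans (degree_X_pow b)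

theorem natDegree_X_pow_sub_X_pow [Nontrivial R] (he : e < b) :
    (X ^ b - X ^ e : R[X]).natDegree = b :=
  natDegree_eq_of_degree_eq_some (degree_X_pow_sub_X_pow he)

theorem sum_monomial_coeff_modByMonic_X_pow_sub_X_pow (he : e < b) (f : R[X]) :
    ∑ j : Fin b, monomial (j : ℕ) ((f %ₘ (X ^ b - X ^ e)).coeff j) = f %ₘ (X ^ b - X ^ e) := by
  nontriviality R
  exact sum_modByMonic_coeff (monic_X_pow_sub_X_pow he) (degree_X_pow_sub_X_pow he).le

end Binomial

section BinomialMultiples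

variable {R : Type*} [CommRing R] {b e : ℕ}

/-- Multiplying by `X ^ b` and by `X ^ e` moves coefficients of `f` of the same parity to degrees of
opposite parities, and `natDegree f + e < b` prevents overlaps. -/
theorem eq_zero_of_mul_X_pow_sub_X_pow_mem_range_expand_two (hbe : Odd (b + e)) {f : R[X]}
    (hdeg : f.natDegree + e < b) (hf : f * (X ^ b - X ^ e) ∈ (expand R 2).range) : f = 0 := by
  have hodd (m : ℕ) (hm : Odd m) : (f * X ^ b).coeff m = (f * X ^ e).coeff m := by
    simpa only [mul_sub, coeff_sub, sub_eq_zero] using coeff_eq_zero_of_mem_range_expand_two hf hm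
  ext n
  rcases le_or_gt n f.natDegree with hn | hn
  · rcases Nat.even_or_odd (n + e) with hne | hne
    · have hcoeff := hodd (n + b) (by grind)
      rwa [coeff_mul_X_pow, coeff_mul_X_pow', if_pos (by omega),
        coeff_eq_zero_of_natDegree_lt (n := n + b - e) (by omega)] at hcoeff
    · have hcoeff := hodd (n + e) hne
      rwa [coeff_mul_X_pow, coeff_mul_X_pow', if_neg (by omega), eq_comm] at hcoeff
  · exact coeff_eq_zero_of_natDegree_lt hn

theorem eq_zero_of_X_pow_sub_X_pow_dvd_comp_neg_X_mul_expand_two [IsDomain R]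
    (he : e < b) (hbe : Odd (b + e)) {z w : R[X]} (hz : z ≠ 0)
    (hdeg : 2 * (z.natDegree + w.natDegree) + e < 2 * b)
    (hdvd : X ^ b - X ^ e ∣ z.comp (-X) * expand R 2 w) : w = 0 := by
  by_contra hw
  have hz' : z.comp (-X) ≠ 0 := comp_neg_X_eq_zero_iff.not.mpr hz
  have hw' : expand R 2 w ≠ 0 := (expand_eq_zero two_pos).not.mpr hw
  have hM : (X ^ b - X ^ e : R[X]) ≠ 0 := (monic_X_pow_sub_X_pow he).ne_zero
  obtain ⟨q, hq⟩ := hdvd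
  have hq0 : q ≠ 0 := right_ne_zero_of_mul (hq ▸ mul_ne_zero hz' hw')
  have hdeg_q : z.natDegree + 2 * w.natDegree = q.natDegree + b := by
    simpa [natDegree_mul, hz', hw', hM, hq0, natDegree_comp, natDegree_expand,
      natDegree_X_pow_sub_X_pow he, mul_comm] using congrArg natDegree hq
  have hzq : z * q = 0 := by
    refine eq_zero_of_mul_X_pow_sub_X_pow_mem_range_expand_two hbe ?_ ?_
    · rw [natDegree_mul hz hq0]
      omega
    · have heven : z * q * (X ^ b - X ^ e) = z * z.comp (-X) * expand R 2 w := by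
        linear_combination -z * hq
      rw [heven]
      exact mul_mem (mul_comp_neg_X_mem_range_expand_two z) ⟨w, rfl⟩
  exact mul_ne_zero hz hq0 hzq

theorem coeff_mul_modByMonic_X_pow_sub_X_pow (he : e < b) {f g : R[X]} {Q : ℕ} (hQ : Q < b)
    (hdeg : f.natDegree + g.natDegree + e < b + Q) :
    (f * (g %ₘ (X ^ b - X ^ e))).coeff Q = (f * g).coeff Q := by
  nontriviality R
  have hM : (X ^ b - X ^ e : R[X]).Monic := monic_X_pow_sub_X_pow he
  set q := g /ₘ (X ^ b - X ^ e) with hq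
  have hexpand : f * (g %ₘ (X ^ b - X ^ e)) = f * g - f * q * X ^ b + f * q * X ^ e := by
    rw [modByMonic_eq_sub_mul_div]
    ring
  have hcoeff_b : (f * q * X ^ b).coeff Q = 0 := by
    rw [coeff_mul_X_pow', if_neg (by omega)]
  have hcoeff_e : (f * q * X ^ e).coeff Q = 0 := by
    rw [coeff_mul_X_pow']
    split_ifs with heQ
    · rcases eq_or_ne q 0 with hq0 | hq0
      · rw [hq0, mul_zero, coeff_zero]
      · have hbg : b ≤ g.natDegree := by
          by_contra! hgb
          refine hq0 ((divByMonic_eq_zero_iff hM).mpr (degree_lt_degree ?_))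
          rwa [natDegree_X_pow_sub_X_pow he]
        have hdeg_q : q.natDegree = g.natDegree - b := by
          rw [hq, natDegree_divByMonic g hM, natDegree_X_pow_sub_X_pow he]
        exact coeff_eq_zero_of_natDegree_lt (natDegree_mul_le.trans_lt (by omega))
    · rfl
  rw [hexpand, coeff_add, coeff_sub, hcoeff_b, hcoeff_e, sub_zero, add_zero]

end BinomialMultiples

section Coefficients

theorem map_ofFn {R S : Type*} [Semiring R] [Semiring S] [DecidableEq R] [DecidableEq S]
    (φ : R →+* S) {n : ℕ} (v : Fin n → R) : (ofFn n v).map φ = ofFn n (φ ∘ v) := by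
  simp [ofFn_eq_sum_monomial, Polynomial.map_sum]

theorem coeff_modByMonic_map_mem {K R : Type*} [CommRing K] [CommRing R] [Algebra K R]
    (S : Submodule K R) {M : K[X]} (hM : M.Monic) {p : R[X]} (hp : ∀ n, p.coeff n ∈ S) (n : ℕ) :
    (p %ₘ M.map (algebraMap K R)).coeff n ∈ S := by
  have hsum : p %ₘ M.map (algebraMap K R) =
      ∑ i ∈ p.support, p.coeff i • (X ^ i %ₘ M).map (algebraMap K R) := by
    conv_lhs => rw [p.as_sum_support_C_mul_X_pow]
    simp only [← smul_eq_C_mul, ← modByMonicHom_apply, map_sum, map_smul]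
    simp only [modByMonicHom_apply, map_modByMonic _ hM, Polynomial.map_pow, map_X]
  rw [hsum, finsetSum_coeff]
  refine sum_mem fun i _ => ?_
  rw [coeff_smul, coeff_map, smul_eq_mul, mul_comm, ← Algebra.smul_def]
  exact S.smul_mem _ (hp i)

theorem coeff_comp_neg_X_mem {R σ : Type*} [Ring R] [SetLike σ R] [NegMemClass σ R] (S : σ)
    {p : R[X]} (hp : ∀ n, p.coeff n ∈ S) (n : ℕ) : (p.comp (-X)).coeff n ∈ S := by
  have hX : (-X : R[X]) = C (-1) * X := by simp
  rw [hX, comp_C_mul_X_coeff]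
  rcases neg_one_pow_eq_or R n with h | h
  · simpa only [h, mul_one] using hp n
  · simpa only [h, mul_neg, mul_one] using neg_mem (hp n)

theorem coeff_mul_X_pow_mem {R σ : Type*} [Semiring R] [SetLike σ R] [ZeroMemClass σ R] (S : σ)
    {p : R[X]} (hp : ∀ n, p.coeff n ∈ S) (m n : ℕ) : (p * X ^ m).coeff n ∈ S := by
  rw [coeff_mul_X_pow']
  split_ifs
  exacts [hp _, zero_mem S]

end Coefficients

section MonomialRows

/-- The matrix, with `n` rows, of the restriction of a linear map `L : R[X] → Rᵐ` to polynomials of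
degree less than `n`, in the monomial basis and acting on row vectors. -/
noncomputable def monomialRows {R : Type*} [Semiring R] {m : ℕ} (n : ℕ) (L : R[X] →ₗ[R] Fin m → R) :
    Matrix (Fin n) (Fin m) R :=
  of fun i => L (X ^ (i : ℕ))

theorem rank_monomialRows {K : Type*} [Field K] {m n : ℕ} {L : K[X] →ₗ[K] Fin m → K}
    (hL : ∀ p : K[X], p.degree < n → L p = 0 → p = 0) : (monomialRows n L).rank = n := by
  have hker : (L.domRestrict (degreeLT K n)).ker = ⊥ :=
    LinearMap.ker_eq_bot'.mpr fun p hp => Subtype.ext (hL p (mem_degreeLT.mp p.2) hp)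
  have hrow : (monomialRows n L).row = L.domRestrict (degreeLT K n) ∘ degreeLT.basis K n := by
    ext i j
    simp [monomialRows]
  have hindep : LinearIndependent K (monomialRows n L).row :=
    hrow ▸ (degreeLT.basis K n).linearIndependent.map' _ hker
  rw [hindep.rank_matrix, Fintype.card_fin]

end MonomialRows

section MonadMaps

variable {R : Type*} [CommRing R] {S : Type*} [CommRing S]

/-- The linear map `w ↦ z(-X) w(X²) mod (Xᵇ - Xᵉ)`, in coordinates: its matrix is the map `B` of the
monad. -/
noncomputable def remainderMap (b e : ℕ) (z : R[X]) : R[X] →ₗ[R] Fin b → R :=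
  toFn b ∘ₗ modByMonicHom (X ^ b - X ^ e) ∘ₗ LinearMap.mulLeft R (z.comp (-X)) ∘ₗ
    (expand R 2).toLinearMap

/-- The linear map sending `u` to the functional "coefficient of `X ^ Q` in `z(X) u(X²) r(X)`" of
polynomials `r` of degree less than `b`, in coordinates: the transpose of its matrix is the map `A`
of the monad. -/
noncomputable def coeffFunctional (b Q : ℕ) (z : R[X]) : R[X] →ₗ[R] Fin b → R :=
  LinearMap.pi fun j => lcoeff R Q ∘ₗ LinearMap.mulRight R (X ^ (j : ℕ)) ∘ₗ LinearMap.mulLeft R z ∘ₗ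
    (expand R 2).toLinearMap

theorem remainderMap_apply (b e : ℕ) (z w : R[X]) (j : Fin b) :
    remainderMap b e z w j = (z.comp (-X) * expand R 2 w %ₘ (X ^ b - X ^ e)).coeff j :=
  rfl

theorem coeffFunctional_apply (b Q : ℕ) (z u : R[X]) (j : Fin b) :
    coeffFunctional b Q z u j = (z * expand R 2 u * X ^ (j : ℕ)).coeff Q :=
  rfl

theorem map_monomialRows_remainderMap (φ : R →+* S) {b e : ℕ} (he : e < b) (c : ℕ) (z : R[X]) :
    (monomialRows c (remainderMap b e z)).map φ = monomialRows c (remainderMap b e (z.map φ)) := by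
  ext i j
  simp only [monomialRows, Matrix.map_apply, of_apply, remainderMap_apply, ← coeff_map,
    map_modByMonic φ (monic_X_pow_sub_X_pow he), Polynomial.map_mul, Polynomial.map_sub,
    Polynomial.map_pow, Polynomial.map_neg, map_comp, map_expand, map_X]

theorem map_monomialRows_coeffFunctional (φ : R →+* S) (a b Q : ℕ) (z : R[X]) :
    (monomialRows a (coeffFunctional b Q z)).map φ =
      monomialRows a (coeffFunctional b Q (z.map φ)) := by
  ext i j
  simp only [monomialRows, Matrix.map_apply, of_apply, coeffFunctional_apply, ← coeff_map,
    Polynomial.map_mul, Polynomial.map_pow, map_expand, map_X]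

theorem remainderMap_dotProduct_coeffFunctional {b e Q : ℕ} (he : e < b) (hQb : Q < b)
    (hQ : Odd Q) {z u w : R[X]}
    (hdeg : 2 * (z.natDegree + u.natDegree + w.natDegree) + e < b + Q) :
    remainderMap b e z w ⬝ᵥ coeffFunctional b Q z u = 0 := by
  nontriviality R
  set f := z * expand R 2 u with hf
  set g := z.comp (-X) * expand R 2 w with hg
  set r := g %ₘ (X ^ b - X ^ e) with hr
  have hdeg_fg : f.natDegree + g.natDegree + e < b + Q := by
    have hf_deg : f.natDegree ≤ z.natDegree + u.natDegree * 2 :=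
      natDegree_mul_le.trans_eq (by rw [natDegree_expand])
    have hg_deg : g.natDegree ≤ z.natDegree + w.natDegree * 2 :=
      natDegree_mul_le.trans_eq
        (by rw [natDegree_expand, natDegree_eq_of_degree_eq degree_comp_neg_X])
    omega
  calc remainderMap b e z w ⬝ᵥ coeffFunctional b Q z u
      = (f * r).coeff Q := by
        rw [hr, ← sum_monomial_coeff_modByMonic_X_pow_sub_X_pow he g]
        simp only [dotProduct, remainderMap_apply, ← C_mul_X_pow_eq_monomial,
          coeffFunctional_apply, Finset.mul_sum, finsetSum_coeff, mul_left_comm f, coeff_C_mul,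
          ← hf, ← hg, ← hr]
    _ = (f * g).coeff Q := coeff_mul_modByMonic_X_pow_sub_X_pow he hQb hdeg_fg
    _ = (z * z.comp (-X) * expand R 2 (u * w)).coeff Q := by
        rw [hf, hg, map_mul]
        ring_nf
    _ = 0 := coeff_eq_zero_of_mem_range_expand_two
        (mul_mem (mul_comp_neg_X_mem_range_expand_two z) ⟨u * w, rfl⟩) hQ

theorem eq_zero_of_remainderMap_eq_zero [IsDomain R] {b e : ℕ} (he : e < b) (hbe : Odd (b + e))
    {z w : R[X]} (hz : z ≠ 0) (hdeg : 2 * (z.natDegree + w.natDegree) + e < 2 * b)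
    (h : remainderMap b e z w = 0) : w = 0 := by
  have hM := monic_X_pow_sub_X_pow (R := R) he
  refine eq_zero_of_X_pow_sub_X_pow_dvd_comp_neg_X_mul_expand_two he hbe hz hdeg
    ((modByMonic_eq_zero_iff_dvd hM).mp ?_)
  rw [← sum_monomial_coeff_modByMonic_X_pow_sub_X_pow he]
  exact Finset.sum_eq_zero fun j _ => (monomial_eq_zero_iff _ _).mpr (congrFun h j)

theorem eq_zero_of_coeffFunctional_eq_zero [IsDomain R] {b Q : ℕ} (hQb : Q < b) {z u : R[X]}
    (hz : z ≠ 0) (hdeg : z.natDegree + 2 * u.natDegree ≤ Q) (h : coeffFunctional b Q z u = 0) :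
    u = 0 := by
  have hzu : z * expand R 2 u = 0 := by
    ext n
    rcases le_or_gt n Q with hn | hn
    · have hcoeff := congrFun h ⟨Q - n, by omega⟩
      rwa [coeffFunctional_apply, coeff_mul_X_pow', if_pos (Nat.sub_le Q n),
        Nat.sub_sub_self hn] at hcoeff
    · refine coeff_eq_zero_of_natDegree_lt (natDegree_mul_le.trans_lt ?_)
      rw [natDegree_expand]
      omega
  exact (expand_eq_zero two_pos).mp ((mul_eq_zero.mp hzu).resolve_left hz)

theorem monomialRows_remainderMap_mul_transpose {a b c e Q : ℕ} (he : e < b)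
    (hQb : Q < b) (hQ : Odd Q) {z : R[X]} (hdeg : 2 * (z.natDegree + a + c) + e < b + Q + 4) :
    monomialRows c (remainderMap b e z) * (monomialRows a (coeffFunctional b Q z))ᵀ = 0 := by
  nontriviality R
  ext l i
  refine remainderMap_dotProduct_coeffFunctional he hQb hQ ?_
  simp only [natDegree_X_pow]
  omega

theorem isHomogeneous_monomialRows_remainderMap {K σ : Type*} [CommRing K] {b c e : ℕ} (he : e < b)
    {z : (MvPolynomial σ K)[X]} (hz : ∀ n, (z.coeff n).IsHomogeneous 1) (i : Fin c) (j : Fin b) :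
    (monomialRows c (remainderMap b e z) i j).IsHomogeneous 1 := by
  have hmem := coeff_modByMonic_map_mem (MvPolynomial.homogeneousSubmodule σ K 1)
    (monic_X_pow_sub_X_pow he)
    (coeff_mul_X_pow_mem _ (coeff_comp_neg_X_mem _ hz) (2 * (i : ℕ))) j
  simpa [monomialRows, remainderMap_apply, pow_mul] using hmem

theorem isHomogeneous_monomialRows_coeffFunctional {K σ : Type*} [CommRing K] {a b Q : ℕ}
    {z : (MvPolynomial σ K)[X]} (hz : ∀ n, (z.coeff n).IsHomogeneous 1) (i : Fin a) (j : Fin b) :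
    (monomialRows a (coeffFunctional b Q z) i j).IsHomogeneous 1 := by
  have hmem := coeff_mul_X_pow_mem (MvPolynomial.homogeneousSubmodule σ K 1) hz (2 * (i : ℕ) + j) Q
  simpa [monomialRows, coeffFunctional_apply, pow_mul, pow_add, mul_assoc] using hmem

theorem rank_monomialRows_remainderMap {K : Type*} [Field K] {b c e : ℕ} (he : e < b)
    (hbe : Odd (b + e)) {z : K[X]} (hz : z ≠ 0) (hdeg : 2 * (z.natDegree + c) + e < 2 * (b + 1)) :
    (monomialRows c (remainderMap b e z)).rank = c := by
  refine rank_monomialRows fun w hw h => ?_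
  by_contra hw0
  have hwc := (natDegree_lt_iff_degree_lt hw0).mpr hw
  exact hw0 (eq_zero_of_remainderMap_eq_zero he hbe hz (by omega) h)

theorem rank_monomialRows_coeffFunctional {K : Type*} [Field K] {a b Q : ℕ} (hQb : Q < b)
    {z : K[X]} (hz : z ≠ 0) (hdeg : z.natDegree + 2 * a ≤ Q + 2) :
    (monomialRows a (coeffFunctional b Q z)).rank = a := by
  refine rank_monomialRows fun u hu h => ?_
  by_contra hu0
  have hua := (natDegree_lt_iff_degree_lt hu0).mpr hu
  exact hu0 (eq_zero_of_coeffFunctional_eq_zero hQb hz (by omega) h)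

end MonadMaps

section LinearMonad

variable {K : Type*} [Field K] {k a b c : ℕ}

/-- `A` and `B` are the maps of a linear monad `𝒪(-1)ᵃ → 𝒪ᵇ → 𝒪(1)ᶜ` on `ℙᵏ`, that is, matrices of
linear forms with zero composite such that `A` is a subbundle inclusion and `B` is surjective. Both
of these conditions are expressed by ranks at the `K`-points of `ℙᵏ`. -/
structure IsLinearMonad (A : Matrix (Fin b) (Fin a) (MvPolynomial (Fin (k + 1)) K))
    (B : Matrix (Fin c) (Fin b) (MvPolynomial (Fin (k + 1)) K)) : Prop where
  isHomogeneous_left : ∀ i j, (A i j).IsHomogeneous 1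
  isHomogeneous_right : ∀ i j, (B i j).IsHomogeneous 1
  comp_eq_zero : B * A = 0
  rank_left : ∀ v : Fin (k + 1) → K, v ≠ 0 → (A.map (MvPolynomial.eval v)).rank = a
  rank_right : ∀ v : Fin (k + 1) → K, v ≠ 0 → (B.map (MvPolynomial.eval v)).rank = c

theorem IsLinearMonad.transpose {A : Matrix (Fin b) (Fin a) (MvPolynomial (Fin (k + 1)) K)}
    {B : Matrix (Fin c) (Fin b) (MvPolynomial (Fin (k + 1)) K)} (h : IsLinearMonad A B) :
    IsLinearMonad Bᵀ Aᵀ where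
  isHomogeneous_left i j := h.isHomogeneous_right j i
  isHomogeneous_right i j := h.isHomogeneous_left j i
  comp_eq_zero := by rw [← transpose_mul, h.comp_eq_zero, transpose_zero]
  rank_left v hv := by rw [transpose_map, rank_transpose, h.rank_right v hv]
  rank_right v hv := by rw [transpose_map, rank_transpose, h.rank_left v hv]

theorem isLinearMonad_monomialRows {e Q : ℕ} (heb : e < b) (hbe : Odd (b + e)) (hQb : Q < b)
    (hQ : Odd Q) {z : (MvPolynomial (Fin (k + 1)) K)[X]}
    (hz : ∀ n, (z.coeff n).IsHomogeneous 1)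
    (hz_map : ∀ v : Fin (k + 1) → K, v ≠ 0 → z.map (MvPolynomial.eval v) ≠ 0)
    (ha : z.natDegree + 2 * a ≤ Q + 2) (hc : 2 * (z.natDegree + c) + e < 2 * (b + 1))
    (hac : 2 * (z.natDegree + a + c) + e < b + Q + 4) :
    IsLinearMonad (monomialRows a (coeffFunctional b Q z))ᵀ
      (monomialRows c (remainderMap b e z)) where
  isHomogeneous_left j i := isHomogeneous_monomialRows_coeffFunctional hz i j
  isHomogeneous_right := isHomogeneous_monomialRows_remainderMap heb hz
  comp_eq_zero := monomialRows_remainderMap_mul_transpose heb hQb hQ hac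
  rank_left v hv := by
    have hdeg : (z.map (MvPolynomial.eval v)).natDegree ≤ z.natDegree := natDegree_map_le
    rw [transpose_map, rank_transpose, map_monomialRows_coeffFunctional]
    exact rank_monomialRows_coeffFunctional hQb (hz_map v hv) (by omega)
  rank_right v hv := by
    have hdeg : (z.map (MvPolynomial.eval v)).natDegree ≤ z.natDegree := natDegree_map_le
    rw [map_monomialRows_remainderMap _ heb]
    exact rank_monomialRows_remainderMap heb hbe (hz_map v hv) (by omega)

theorem exists_isLinearMonad_of_le (K : Type*) [Field K] (hac : a ≤ c) (hb : 2 ≤ b)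
    (h : a + c + k ≤ b) :
    ∃ (A : Matrix (Fin b) (Fin a) (MvPolynomial (Fin (k + 1)) K))
      (B : Matrix (Fin c) (Fin b) (MvPolynomial (Fin (k + 1)) K)), IsLinearMonad A B := by
  classical
  obtain ⟨e, he, hbe⟩ : ∃ e ≤ 1, Odd (b + e) := by
    rcases Nat.even_or_odd b with heven | hodd
    exacts [⟨1, le_rfl, heven.add_one⟩, ⟨0, zero_le_one, hodd⟩]
  obtain ⟨Q, hQ⟩ : ∃ Q, Q + 2 = b + e := ⟨b + e - 2, by omega⟩
  let z : (MvPolynomial (Fin (k + 1)) K)[X] := ofFn (k + 1) MvPolynomial.X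
  have hz_deg : z.natDegree ≤ k := Nat.le_of_lt_succ (ofFn_natDegree_lt k.succ_pos _)
  have hz_lin (n : ℕ) : (z.coeff n).IsHomogeneous 1 := by
    rcases lt_or_ge n (k + 1) with hn | hn
    · simpa [z, hn] using MvPolynomial.isHomogeneous_X K _
    · simpa [z, hn] using MvPolynomial.isHomogeneous_zero _ K 1
  have hz_map (v : Fin (k + 1) → K) (hv : v ≠ 0) : z.map (MvPolynomial.eval v) ≠ 0 := by
    have heval : MvPolynomial.eval v ∘ MvPolynomial.X = v := funext fun i => MvPolynomial.eval_X i
    rwa [map_ofFn, heval, Ne, map_eq_zero_iff _ (injective_ofFn (k + 1))]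
  exact ⟨_, _, isLinearMonad_monomialRows (e := e) (Q := Q) (by omega) hbe (by omega) (by grind)
    hz_lin hz_map (by omega) (by omega) (by omega)⟩

end LinearMonad

/-- Fløystad's existence theorem (sufficiency, condition (2)): if `k ≥ 1` and
`b ≥ a + c + k`, then there is a linear monad
`0 → O_{ℙᵏ}(-1)^⊕a → O_{ℙᵏ}^⊕b → O_{ℙᵏ}(1)^⊕c → 0`, i.e. matrices `A` (size `b × a`) and
`B` (size `c × b`) of linear forms in `K[x₀,…,x_k]` with `B·A = 0`, `A` of rank `a` and `B` of
rank `c` at every point of `ℙᵏ`. -/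
theorem stmt_16 (K : Type*) [Field K] (k a b c : ℕ)
    (hk : 1 ≤ k) (ha : 0 < a) (hb : 0 < b) (hc : 0 < c)
    (h : b ≥ a + c + k) :
    ∃ (A : Matrix (Fin b) (Fin a) (MvPolynomial (Fin (k + 1)) K))
      (B : Matrix (Fin c) (Fin b) (MvPolynomial (Fin (k + 1)) K)),
      (∀ i j, (A i j).IsHomogeneous 1) ∧
      (∀ i j, (B i j).IsHomogeneous 1) ∧
      B * A = 0 ∧
      (∀ v : Fin (k + 1) → K, v ≠ 0 →
        (A.map (MvPolynomial.eval v)).rank = a ∧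
        (B.map (MvPolynomial.eval v)).rank = c) := by
  suffices hmonad : ∃ A B, IsLinearMonad (K := K) (k := k) (a := a) (b := b) (c := c) A B by
    obtain ⟨A, B, hAB⟩ := hmonad
    exact ⟨A, B, hAB.isHomogeneous_left, hAB.isHomogeneous_right, hAB.comp_eq_zero,
      fun v hv => ⟨hAB.rank_left v hv, hAB.rank_right v hv⟩⟩
  rcases le_total a c with hac | hca
  · exact exists_isLinearMonad_of_le K hac (by omega) h
  · obtain ⟨A, B, hAB⟩ := exists_isLinearMonad_of_le (k := k) (b := b) K hca (by omega) (by omega)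
    exact ⟨Bᵀ, Aᵀ, hAB.transpose⟩
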